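/- Let P be a symmetric positive definite n×n real matrix, B an n×m real matrix, K an m×n real matrix, and A₁, …, A_N n×n real matrices such that (Aᵢ + BK)ᵀ P + P (Aᵢ + BK) is negative definite for every i ∈ {1, …, N}. Let σ : ℝ → {1, …, N} be an arbitrary switching signal and let x : ℝ → ℝⁿ satisfy, for every t ≥ 0, x′(t) = (A_{σ(t)} + BK) x(t). Then x(t) → 0 as t → +∞. -/

import Mathlib

/-!
The common Lyapunov function `V v = vᵀ P v` decays exponentially along the trajectory. By
compactness of the unit sphere and homogeneity (`exists_pos_mul_le_of_homogeneous`), the form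
`-vᵀ ((Aᵢ + BK)ᵀ P + P (Aᵢ + BK)) v` dominates `εᵢ V v` for some `εᵢ > 0`. With `ε` the least of
these finitely many constants, `d/dt V (x t) ≤ -ε V (x t)` at every `t ≥ 0` whatever the value of
`σ t`, so `V (x t) exp (ε t)` is nonincreasing on `[0, ∞)`. As `V v ≥ c ‖v‖²` for some `c > 0`, by
the same compactness argument, `x t → 0`. Only the pointwise derivative is used (through the mean
value theorem), so no regularity of `σ` is needed.
-/

open Matrix

/-- A continuous function that is homogeneous of degree two and positive away from the origin
dominates a positive multiple of any other continuous function homogeneous of degree two. -/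
lemma exists_pos_mul_le_of_homogeneous {n : ℕ} (f g : (Fin n → ℝ) → ℝ)
    (hf : Continuous f) (hg : Continuous g)
    (hf2 : ∀ (r : ℝ) v, f (r • v) = r ^ 2 * f v) (hg2 : ∀ (r : ℝ) v, g (r • v) = r ^ 2 * g v)
    (hpos : ∀ v, v ≠ 0 → 0 < f v) :
    ∃ ε : ℝ, 0 < ε ∧ ∀ v, ε * g v ≤ f v := by
  have hS : IsCompact (Metric.sphere (0 : Fin n → ℝ) 1) := isCompact_sphere 0 1
  obtain ⟨a, ha, haf⟩ := hS.exists_forall_le' hf.continuousOn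
    (a := 0) (fun v hv => hpos v (by rintro rfl; simp at hv))
  obtain ⟨G, hG⟩ := hS.exists_bound_of_continuousOn hg.continuousOn
  have hG1 : 0 < |G| + 1 := by positivity
  refine ⟨a / (|G| + 1), div_pos ha hG1, fun v => ?_⟩
  by_cases hv : v = 0
  · have h1 := hf2 0 0
    have h2 := hg2 0 0
    simp only [smul_zero] at h1 h2
    rw [hv, h1, h2]
    simp
  have hn : 0 < ‖v‖ := norm_pos_iff.mpr hv
  have hu : ‖v‖⁻¹ • v ∈ Metric.sphere (0 : Fin n → ℝ) 1 := by
    simp [norm_smul, hn.ne']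
  have hvu : v = ‖v‖ • (‖v‖⁻¹ • v) := by rw [smul_smul, mul_inv_cancel₀ hn.ne', one_smul]
  generalize ‖v‖⁻¹ • v = u at hu hvu
  rw [hvu, hf2, hg2]
  have h1 := haf u hu
  have h2 : g u ≤ |G| + 1 :=
    (le_abs_self _).trans ((hG u hu).trans ((le_abs_self G).trans (by linarith)))
  have h3 : a / (|G| + 1) * g u ≤ a := by
    calc a / (|G| + 1) * g u ≤ a / (|G| + 1) * (|G| + 1) := by gcongr
      _ = a := by field_simp
  calc a / (|G| + 1) * (‖v‖ ^ 2 * g u) = ‖v‖ ^ 2 * (a / (|G| + 1) * g u) := by ring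
    _ ≤ ‖v‖ ^ 2 * f u := by gcongr; exact h3.trans h1

lemma continuous_quadForm {n : ℕ} (M : Matrix (Fin n) (Fin n) ℝ) :
    Continuous fun v : Fin n → ℝ => v ⬝ᵥ M.mulVec v :=
  continuous_id.dotProduct (continuous_const.matrix_mulVec continuous_id)

lemma quadForm_smul {n : ℕ} (M : Matrix (Fin n) (Fin n) ℝ) (r : ℝ) (v : Fin n → ℝ) :
    (r • v) ⬝ᵥ M.mulVec (r • v) = r ^ 2 * (v ⬝ᵥ M.mulVec v) := by
  simp only [mulVec_smul, smul_dotProduct, dotProduct_smul, smul_eq_mul]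
  ring

lemma hasDerivAt_quadForm {n : ℕ} (P M : Matrix (Fin n) (Fin n) ℝ) {x : ℝ → Fin n → ℝ} {t : ℝ}
    (hx : HasDerivAt x (M.mulVec (x t)) t) :
    HasDerivAt (fun s => x s ⬝ᵥ P.mulVec (x s))
      (x t ⬝ᵥ (Mᵀ * P + P * M).mulVec (x t)) t := by
  have hPx : HasDerivAt (fun s => P.mulVec (x s)) (P.mulVec (M.mulVec (x t))) t :=
    (LinearMap.toContinuousLinearMap (Matrix.mulVecLin P)).hasFDerivAt.comp_hasDerivAt t hx
  have h := HasDerivAt.fun_sum (u := Finset.univ) fun i _ =>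
    (hasDerivAt_pi.mp hx i).mul (hasDerivAt_pi.mp hPx i)
  refine h.congr_deriv ?_
  rw [Finset.sum_add_distrib, add_mulVec, dotProduct_add, ← mulVec_mulVec, ← mulVec_mulVec,
    dotProduct_mulVec (x t) Mᵀ, vecMul_transpose]
  rfl

/-- Stability conclusion of the paper's Corollary 2.1(a): a common quadratic
Lyapunov function satisfying the closed-loop Lyapunov matrix inequality for each
subsystem guarantees asymptotic stability of the switched linear system
`ẋ = (A_{σ(t)} + BK) x` under arbitrary switching. -/
theorem switched_system_asymptotic_stability {n m N : ℕ}
    (P : Matrix (Fin n) (Fin n) ℝ) (B : Matrix (Fin n) (Fin m) ℝ)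
    (K : Matrix (Fin m) (Fin n) ℝ) (A : Fin N → Matrix (Fin n) (Fin n) ℝ)
    (hPsymm : Pᵀ = P)
    (hPpos : ∀ v : Fin n → ℝ, v ≠ 0 → 0 < v ⬝ᵥ P.mulVec v)
    (hA : ∀ i : Fin N, ∀ v : Fin n → ℝ, v ≠ 0 →
      v ⬝ᵥ ((A i + B * K)ᵀ * P + P * (A i + B * K)).mulVec v < 0)
    (σ : ℝ → Fin N)
    (x : ℝ → (Fin n → ℝ))
    (hx : ∀ t : ℝ, 0 ≤ t → HasDerivAt x ((A (σ t) + B * K).mulVec (x t)) t) :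
    Filter.Tendsto x Filter.atTop (nhds 0) := by
  obtain ⟨c, hc, hcP⟩ := exists_pos_mul_le_of_homogeneous
    (fun v => v ⬝ᵥ P.mulVec v) (fun v => ‖v‖ ^ 2) (continuous_quadForm P) (by fun_prop)
    (quadForm_smul P) (fun r v => by simp [norm_smul, mul_pow]) hPpos
  have hdecay : ∀ i : Fin N, ∃ ε : ℝ, 0 < ε ∧ ∀ v : Fin n → ℝ, ε * (v ⬝ᵥ P.mulVec v) ≤
      -(v ⬝ᵥ ((A i + B * K)ᵀ * P + P * (A i + B * K)).mulVec v) := fun i =>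
    exists_pos_mul_le_of_homogeneous _ (fun v => v ⬝ᵥ P.mulVec v)
      (continuous_quadForm _).neg (continuous_quadForm P)
      (fun r v => by rw [quadForm_smul]; ring) (quadForm_smul P)
      (fun v hv => neg_pos.mpr (hA i v hv))
  choose ε hε hεV using hdecay
  -- There is at least one subsystem because `σ` takes values in `Fin N`.
  have : Nonempty (Fin N) := ⟨σ 0⟩
  obtain ⟨j, hj⟩ := Finite.exists_min ε
  have hVnonneg : ∀ v : Fin n → ℝ, 0 ≤ v ⬝ᵥ P.mulVec v := fun v =>
    le_trans (by positivity) (hcP v)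
  have hderiv : ∀ t : ℝ, 0 ≤ t → HasDerivAt
      (fun s => (x s ⬝ᵥ P.mulVec (x s)) * Real.exp (ε j * s))
      ((x t ⬝ᵥ ((A (σ t) + B * K)ᵀ * P + P * (A (σ t) + B * K)).mulVec (x t)) *
        Real.exp (ε j * t) + (x t ⬝ᵥ P.mulVec (x t)) * (Real.exp (ε j * t) * (ε j * 1))) t :=
    fun t ht => (hasDerivAt_quadForm P _ (hx t ht)).mul
      (((hasDerivAt_id t).const_mul (ε j)).exp)
  have hanti : AntitoneOn (fun s => (x s ⬝ᵥ P.mulVec (x s)) * Real.exp (ε j * s))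
      (Set.Ici 0) := by
    apply antitoneOn_of_deriv_nonpos (convex_Ici 0)
    · exact fun t ht => (hderiv t ht).continuousAt.continuousWithinAt
    · exact fun t ht => (hderiv t (interior_subset ht)).differentiableAt.differentiableWithinAt
    · intro t ht
      rw [(hderiv t (interior_subset ht)).deriv]
      have h1 := hεV (σ t) (x t)
      have h2 := mul_le_mul_of_nonneg_right (hj (σ t)) (hVnonneg (x t))
      have h3 := Real.exp_pos (ε j * t)
      nlinarith
  have hbound : ∀ t : ℝ, 0 ≤ t →
      ‖x t‖ ^ 2 ≤ (x 0 ⬝ᵥ P.mulVec (x 0)) / c * Real.exp (-(ε j * t)) := by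
    intro t ht
    have h1 := hanti Set.self_mem_Ici ht ht
    simp only [mul_zero, Real.exp_zero, mul_one] at h1
    have h2 := hcP (x t)
    rw [Real.exp_neg, ← div_eq_mul_inv, le_div_iff₀ (Real.exp_pos _), le_div_iff₀ hc]
    have h3 := mul_le_mul_of_nonneg_right h2 (Real.exp_pos (ε j * t)).le
    linarith
  have hlim : Filter.Tendsto
      (fun t => (x 0 ⬝ᵥ P.mulVec (x 0)) / c * Real.exp (-(ε j * t))) Filter.atTop (nhds 0) := by
    have h := (Real.tendsto_exp_neg_atTop_nhds_zero.comp
      (Filter.tendsto_id.const_mul_atTop (hε j))).const_mul ((x 0 ⬝ᵥ P.mulVec (x 0)) / c)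
    simpa using h
  have hsq : Filter.Tendsto (fun t => ‖x t‖ ^ 2) Filter.atTop (nhds 0) :=
    squeeze_zero' (Filter.Eventually.of_forall fun t => by positivity)
      ((Filter.eventually_ge_atTop 0).mono hbound) hlim
  rw [tendsto_zero_iff_norm_tendsto_zero]
  simpa using hsq.sqrt
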